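/- (Entropy-based analytic ELBO.) Consider data x¹,…,x^N ∈ ℝ^D, a matrix W̃ ∈ ℝ^{D×H}, and Gaussian variational distributions q_n = N(ν^{(n)}, T^{(n)}) on ℝ^H with positive definite covariances T^{(n)}. Set σ²_opt = (1/(N·D))·Σ_n [ tr(W̃ᵀ·W̃·T^{(n)}) + ‖W̃·ν^{(n)} − x^{(n)}‖² ] and λ_h^opt = (1/N)·Σ_n √(T^{(n)}_{hh})·M( ν_h^{(n)} / √(T^{(n)}_{hh}) ). Then the ELBO ℒ(λ,σ²) = (1/N)·Σ_n ∫ q_n(z)·[ log p_{σ²}(x^{(n)}|z) + log p_λ(z) − log q_n(z) ] dz evaluated at λ = λ^opt and σ² = σ²_opt equals the fully analytic expression (1/N)·Σ_{n=1}^N (1/2)·log det(2πe·T^{(n)}) − Σ_{h=1}^H log(2·e·λ_h^opt) − (D/2)·log(2πe·σ²_opt). -/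

import Mathlib

open MeasureTheory Matrix Real

/-- The error function `erf x = (2/sqrt pi) * integral_0^x exp(-t^2) dt`. -/
noncomputable def erf (x : ℝ) : ℝ :=
  (2 / Real.sqrt Real.pi) * ∫ t in (0:ℝ)..x, Real.exp (-t ^ 2)

/-- `M a = sqrt (2/pi) * exp (-a^2/2) + a * erf (a/sqrt 2)`. -/
noncomputable def Mfun (a : ℝ) : ℝ :=
  Real.sqrt (2 / Real.pi) * Real.exp (-a ^ 2 / 2) + a * erf (a / Real.sqrt 2)

/-- Factorized Laplace prior density with scales `lam`. -/
noncomputable def laplacePdf {H : ℕ} (lam : Fin H → ℝ) (z : Fin H → ℝ) : ℝ :=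
  ∏ h, (1 / (2 * lam h)) * Real.exp (-|z h| / lam h)

/-- Gaussian observation density `p_s(x|z) = (2*pi*s)^(-D/2) * exp(-||x - W z||^2/(2*s))`. -/
noncomputable def gaussObsPdf {D H : ℕ} (W : Matrix (Fin D) (Fin H) ℝ) (s : ℝ)
    (x : Fin D → ℝ) (z : Fin H → ℝ) : ℝ :=
  (2 * Real.pi * s) ^ (-(D : ℝ) / 2) *
    Real.exp (-(∑ i, (x i - W.mulVec z i) ^ 2) / (2 * s))

/-- Multivariate Gaussian density on `R^H` with mean `nu` and covariance `T`:
`(2*pi)^(-H/2) * det(T)^(-1/2) * exp(-(z-nu)^T T^{-1} (z-nu) / 2)`. -/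
noncomputable def gaussPdfMulti {H : ℕ} (ν : Fin H → ℝ) (T : Matrix (Fin H) (Fin H) ℝ)
    (z : Fin H → ℝ) : ℝ :=
  (Real.sqrt ((2 * Real.pi) ^ (H : ℕ) * T.det))⁻¹ *
    Real.exp (-(∑ i, (z i - ν i) * (T⁻¹.mulVec fun j => z j - ν j) i) / 2)

/-! A marginal of `N(ν, T)` is a one-dimensional Gaussian, and `M a` is the mean absolute value of
`a + Z` for a standard Gaussian `Z`, so every expectation under `q_n` is explicit. Averaging over
the data, the ELBO at arbitrary scales and variance is

  mean entropy of the `q_n` - ∑ h, (log (2 λ_h) + λ_h^opt / λ_h)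
    - (D / 2) (log (2π σ²) + σ²_opt / σ²).

At the optimum every ratio equals `1`, and `log c + 1 = log (e c)` turns the last two terms into the
entropies of the Laplace prior and of the Gaussian observation noise. -/

open ProbabilityTheory Filter Set Topology WithLp
open scoped MatrixOrder NNReal

section ErrorFunction

lemma erf_neg (x : ℝ) : erf (-x) = -erf x := by
  have h := intervalIntegral.integral_comp_neg (a := 0) (b := x) fun t : ℝ => exp (-t ^ 2)
  simp only [neg_sq, neg_zero] at h
  rw [erf, erf, h, intervalIntegral.integral_symm (-x) 0, mul_neg]

lemma hasDerivAt_erf (x : ℝ) : HasDerivAt erf (2 / √π * exp (-x ^ 2)) x := by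
  have hcont : Continuous fun t : ℝ => exp (-t ^ 2) := by fun_prop
  exact (hcont.integral_hasStrictDerivAt 0 x).hasDerivAt.const_mul _

lemma tendsto_erf_atTop : Tendsto erf atTop (𝓝 1) := by
  have hint : Integrable fun t : ℝ => exp (-t ^ 2) := by
    simpa using integrable_exp_neg_mul_sq one_pos
  have hval : ∫ t in Ioi (0 : ℝ), exp (-t ^ 2) = √π / 2 := by
    simpa using integral_gaussian_Ioi 1
  have hlim := (intervalIntegral_tendsto_integral_Ioi 0 hint.integrableOn tendsto_id).const_mul
    (2 / √π)
  rwa [hval, div_mul_div_cancel₀ (by positivity), div_self two_ne_zero] at hlim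

end ErrorFunction

section StandardGaussian

lemma gaussianPDFReal_zero_one (x : ℝ) :
    gaussianPDFReal 0 1 x = (√(2 * π))⁻¹ * exp (-x ^ 2 / 2) := by
  simp [gaussianPDFReal]

lemma hasDerivAt_gaussianPDFReal_zero_one (x : ℝ) :
    HasDerivAt (gaussianPDFReal 0 1) (-x * gaussianPDFReal 0 1 x) x := by
  have hexponent : HasDerivAt (fun t : ℝ => -t ^ 2 / 2) (-x) x :=
    ((hasDerivAt_pow 2 x).neg.div_const 2).congr_deriv (by ring)
  rw [funext gaussianPDFReal_zero_one]
  exact (hexponent.exp.const_mul _).congr_deriv (by ring)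

lemma hasDerivAt_erf_div_sqrt_two (x : ℝ) :
    HasDerivAt (fun t => erf (t / √2)) (2 * gaussianPDFReal 0 1 x) x := by
  refine ((hasDerivAt_erf (x / √2)).comp x ((hasDerivAt_id x).div_const √2)).congr_deriv ?_
  rw [gaussianPDFReal_zero_one, div_pow, sq_sqrt zero_le_two, sqrt_mul zero_le_two, neg_div]
  field

lemma tendsto_gaussianPDFReal_zero_one_atTop :
    Tendsto (gaussianPDFReal 0 1) atTop (𝓝 0) := by
  have hexponent : Tendsto (fun t : ℝ => -t ^ 2 / 2) atTop atBot := by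
    simp_rw [neg_div]
    exact tendsto_neg_atTop_atBot.comp
      ((tendsto_pow_atTop two_ne_zero).atTop_div_const two_pos)
  rw [funext gaussianPDFReal_zero_one]
  simpa using (tendsto_exp_atBot.comp hexponent).const_mul (√(2 * π))⁻¹

lemma Mfun_eq_gaussianPDFReal_add (a : ℝ) :
    Mfun a = 2 * gaussianPDFReal 0 1 a + a * erf (a / √2) := by
  have hconst : √(2 / π) = 2 * (√(2 * π))⁻¹ := by
    rw [sqrt_div zero_le_two, sqrt_mul zero_le_two]
    field_simp
    exact sq_sqrt zero_le_two
  rw [Mfun, hconst, gaussianPDFReal_zero_one, mul_assoc]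

lemma integrable_id_gaussianReal (m : ℝ) (v : ℝ≥0) :
    Integrable (fun x : ℝ => x) (gaussianReal m v) :=
  (memLp_id_gaussianReal' 1 (by simp)).integrable le_rfl

lemma integrable_gaussianPDFReal_mul_add_const (a : ℝ) :
    Integrable fun x => gaussianPDFReal 0 1 x * (x + a) := by
  have h : Integrable (fun x => x + a) (gaussianReal 0 1) :=
    (integrable_id_gaussianReal 0 1).add (integrable_const a)
  rw [gaussianReal_of_var_ne_zero _ one_ne_zero,
    integrable_withDensity_iff_integrable_smul' (measurable_gaussianPDF _ _)
      (ae_of_all _ fun _ => gaussianPDF_lt_top)] at h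
  simpa [toReal_gaussianPDF] using h

lemma integral_gaussianPDFReal_mul_add_const (a : ℝ) :
    ∫ x, gaussianPDFReal 0 1 x * (x + a) = a := by
  have h := integral_gaussianReal_eq_integral_smul (μ := 0) (f := fun x => x + a) one_ne_zero
  rw [integral_add (integrable_id_gaussianReal 0 1) (integrable_const a),
    integral_id_gaussianReal] at h
  simpa using h.symm

-- The integrand is the derivative of `-φ x + (a / 2) * erf (x / √2)`, `φ` the standard density.
lemma integral_Ioi_gaussianPDFReal_mul_add_const (a : ℝ) :
    ∫ x in Ioi (-a), gaussianPDFReal 0 1 x * (x + a) = (a + Mfun a) / 2 := by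
  have hderiv (x : ℝ) : HasDerivAt (fun t => -gaussianPDFReal 0 1 t + a / 2 * erf (t / √2))
      (gaussianPDFReal 0 1 x * (x + a)) x :=
    ((hasDerivAt_gaussianPDFReal_zero_one x).neg.add
      ((hasDerivAt_erf_div_sqrt_two x).const_mul (a / 2))).congr_deriv (by ring)
  have hlim : Tendsto (fun t => -gaussianPDFReal 0 1 t + a / 2 * erf (t / √2)) atTop
      (𝓝 (-0 + a / 2 * 1)) :=
    tendsto_gaussianPDFReal_zero_one_atTop.neg.add
      ((tendsto_erf_atTop.comp (tendsto_id.atTop_div_const (by positivity))).const_mul _)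
  have heven : gaussianPDFReal 0 1 (-a) = gaussianPDFReal 0 1 a := by
    simp [gaussianPDFReal_zero_one]
  rw [integral_Ioi_of_hasDerivAt_of_tendsto' (fun x _ => hderiv x)
    (integrable_gaussianPDFReal_mul_add_const a).integrableOn hlim, heven, neg_div, erf_neg,
    Mfun_eq_gaussianPDFReal_add]
  ring

lemma integral_abs_add_const_gaussianReal (a : ℝ) :
    ∫ x, |x + a| ∂(gaussianReal 0 1) = Mfun a := by
  set g : ℝ → ℝ := fun x => gaussianPDFReal 0 1 x * (x + a) with hg
  have hpdf (x : ℝ) : 0 < gaussianPDFReal 0 1 x := gaussianPDFReal_pos _ _ _ one_ne_zero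
  have hint : Integrable g := integrable_gaussianPDFReal_mul_add_const a
  have habs (x : ℝ) : gaussianPDFReal 0 1 x • |x + a| = ‖g x‖ := by
    simp [hg, abs_of_pos (hpdf x)]
  have hnonneg : {x | 0 ≤ g x} = Ici (-a) := by
    ext x; simp [hg, mul_nonneg_iff_of_pos_left (hpdf x), neg_le_iff_add_nonneg]
  have hnonpos : {x | g x ≤ 0} = Iic (-a) := by
    ext x; simp [hg, ← not_lt, mul_pos_iff_of_pos_left (hpdf x), neg_lt_iff_pos_add]
  have hsplit := intervalIntegral.integral_Iic_add_Ioi (b := -a) hint.integrableOn hint.integrableOn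
  rw [integral_gaussianPDFReal_mul_add_const, integral_Ioi_gaussianPDFReal_mul_add_const] at hsplit
  rw [integral_gaussianReal_eq_integral_smul one_ne_zero, integral_congr_ae (ae_of_all _ habs),
    integral_norm_eq_pos_sub_neg hint, hnonneg, hnonpos, integral_Ici_eq_integral_Ioi,
    integral_Ioi_gaussianPDFReal_mul_add_const]
  linarith

lemma Mfun_pos (a : ℝ) : 0 < Mfun a := by
  have hint : Integrable (fun x => |x + a|) (gaussianReal 0 1) :=
    ((integrable_id_gaussianReal 0 1).add (integrable_const a)).abs
  have hsupport : Function.support (fun x : ℝ => |x + a|) = {-a}ᶜ := by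
    ext x; simp [add_eq_zero_iff_eq_neg]
  have := nullSingletonClass_gaussianReal (μ := 0) one_ne_zero
  rw [← integral_abs_add_const_gaussianReal,
    integral_pos_iff_support_of_nonneg (fun x => abs_nonneg _) hint, hsupport,
    prob_compl_eq_one_sub (measurableSet_singleton _)]
  simp

lemma integral_abs_gaussianReal (m : ℝ) {v : ℝ≥0} (hv : v ≠ 0) :
    ∫ x, |x| ∂(gaussianReal m v) = √v * Mfun (m / √v) := by
  have hσ : 0 < √(v : ℝ) := sqrt_pos.mpr (NNReal.coe_pos.mpr hv.bot_lt)
  have hlaw : (gaussianReal 0 1).map (fun x => √v * (x + m / √v)) = gaussianReal m v := by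
    change (gaussianReal 0 1).map ((fun x => √v * x) ∘ fun x => x + m / √v) = _
    rw [← Measure.map_map (by fun_prop) (by fun_prop), gaussianReal_map_add_const,
      gaussianReal_map_const_mul, zero_add, mul_div_cancel₀ _ hσ.ne']
    congr
    ext
    simp
  rw [← hlaw, integral_map (by fun_prop) (by fun_prop), ← integral_abs_add_const_gaussianReal,
    ← integral_const_mul]
  simp_rw [abs_mul, abs_of_pos hσ]

end StandardGaussian

section ChangeOfVariables

lemma pi_withDensity_ofReal {ι : Type*} [Fintype ι] {α : ι → Type*}
    [∀ i, MeasurableSpace (α i)] (μ : ∀ i, Measure (α i)) [∀ i, SigmaFinite (μ i)]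
    {f : ∀ i, α i → ℝ} (hf : ∀ i, Integrable (f i) (μ i)) (hf₀ : ∀ i a, 0 ≤ f i a) :
    Measure.pi (fun i => (μ i).withDensity fun a => ENNReal.ofReal (f i a)) =
      (Measure.pi μ).withDensity fun x => ENNReal.ofReal (∏ i, f i (x i)) := by
  have (i : ι) : IsFiniteMeasure ((μ i).withDensity fun a => ENNReal.ofReal (f i a)) :=
    isFiniteMeasure_withDensity_ofReal (hf i).2
  refine Measure.pi_eq fun s hs => ?_
  rw [withDensity_apply _ (MeasurableSet.univ_pi hs),
    ← ofReal_integral_eq_lintegral_ofReal (Integrable.fintype_prod_dep hf).integrableOn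
      (ae_of_all _ fun x => Finset.prod_nonneg fun i _ => hf₀ i (x i)),
    Measure.restrict_pi_pi, integral_fintype_prod_eq_prod,
    ENNReal.ofReal_prod_of_nonneg fun i _ => integral_nonneg (hf₀ i)]
  refine Finset.prod_congr rfl fun i _ => ?_
  rw [withDensity_apply _ (hs i),
    ofReal_integral_eq_lintegral_ofReal (hf i).integrableOn (ae_of_all _ (hf₀ i))]

variable {ι E : Type*} [Fintype ι] [NormedAddCommGroup E] [NormedSpace ℝ E]

lemma integral_pi_gaussianReal_zero_one (f : (ι → ℝ) → E) :
    ∫ u, f u ∂(Measure.pi fun _ => gaussianReal 0 1) =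
      ∫ u : ι → ℝ, (∏ i, gaussianPDFReal 0 1 (u i)) • f u := by
  have hmeas : Measurable fun u : ι → ℝ => ∏ i, gaussianPDFReal 0 1 (u i) :=
    Finset.measurable_fun_prod _ fun i _ =>
      (measurable_gaussianPDFReal 0 1).comp (measurable_pi_apply i)
  have hdensity : Measure.pi (fun _ : ι => gaussianReal 0 1) =
      volume.withDensity fun u => ENNReal.ofReal (∏ i, gaussianPDFReal 0 1 (u i)) := by
    simp_rw [gaussianReal_of_var_ne_zero 0 one_ne_zero, gaussianPDF_def]
    exact pi_withDensity_ofReal (fun _ => volume) (fun _ => integrable_gaussianPDFReal 0 1)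
      fun _ => gaussianPDFReal_nonneg 0 1
  rw [hdensity, integral_withDensity_eq_integral_toReal_smul hmeas.ennreal_ofReal
    (ae_of_all _ fun _ => ENNReal.ofReal_lt_top)]
  simp_rw [ENNReal.toReal_ofReal (Finset.prod_nonneg fun _ _ => gaussianPDFReal_nonneg 0 1 _)]

lemma integral_eq_abs_det_smul_integral_add_mulVec [DecidableEq ι] (b : ι → ℝ)
    {A : Matrix ι ι ℝ} (hA : IsUnit A) (f : (ι → ℝ) → E) :
    ∫ z, f z = |A.det| • ∫ u, f (b + A *ᵥ u) := by
  have hderiv (u : ι → ℝ) :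
      HasFDerivAt (fun u => b + A *ᵥ u) (LinearMap.toContinuousLinearMap (toLin' A)) u :=
    (LinearMap.toContinuousLinearMap (toLin' A)).hasFDerivAt.const_add b
  have hinj : Function.Injective fun u => b + A *ᵥ u :=
    (add_right_injective b).comp (mulVec_injective_of_isUnit hA)
  have hrange : range (fun u => b + A *ᵥ u) = univ :=
    ((AddAction.bijective b).surjective.comp (mulVec_surjective_iff_isUnit.mpr hA)).range_eq
  have h := integral_image_eq_integral_abs_det_fderiv_smul volume MeasurableSet.univ
    (fun u _ => (hderiv u).hasFDerivWithinAt) hinj.injOn f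
  rwa [image_univ, hrange, setIntegral_univ, setIntegral_univ, integral_smul,
    LinearMap.det_toContinuousLinearMap, LinearMap.det_toLin'] at h

end ChangeOfVariables

section GaussianDensity

variable {H : ℕ}

lemma abs_det_mul_gaussPdfMulti_add_mulVec (m u : Fin H → ℝ) {A : Matrix (Fin H) (Fin H) ℝ}
    (hA : IsUnit A) :
    |A.det| * gaussPdfMulti m (A * Aᵀ) (m + A *ᵥ u) = ∏ i, gaussianPDFReal 0 1 (u i) := by
  have hdet : IsUnit A.det := (isUnit_iff_isUnit_det A).mp hA
  have hdetT : IsUnit Aᵀ.det := by rwa [det_transpose]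
  have hquad : A *ᵥ u ⬝ᵥ (A * Aᵀ)⁻¹ *ᵥ (A *ᵥ u) = ∑ i, u i ^ 2 := by
    calc A *ᵥ u ⬝ᵥ (A * Aᵀ)⁻¹ *ᵥ (A *ᵥ u) = A *ᵥ u ⬝ᵥ Aᵀ⁻¹ *ᵥ u := by
          rw [mulVec_mulVec, Matrix.mul_inv_rev, Matrix.mul_assoc, nonsing_inv_mul _ hdet,
            Matrix.mul_one]
      _ = u ⬝ᵥ u := by
          rw [← vecMul_transpose, ← dotProduct_mulVec, mulVec_mulVec, mul_nonsing_inv _ hdetT,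
            one_mulVec]
      _ = ∑ i, u i ^ 2 := by simp only [dotProduct, sq]
  have hnorm : √((2 * π) ^ H * (A * Aᵀ).det) = √(2 * π) ^ H * |A.det| := by
    rw [det_mul, det_transpose, sqrt_mul (by positivity), sqrt_mul_self_eq_abs,
      sqrt_eq_rpow, ← rpow_natCast_mul (by positivity), mul_comm (H : ℝ),
      rpow_mul_natCast (by positivity), ← sqrt_eq_rpow]
  have hpos : 0 < |A.det| := abs_pos.mpr hdet.ne_zero
  simp only [gaussianPDFReal_zero_one, Finset.prod_mul_distrib, ← exp_sum, ← Finset.sum_div,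
    Finset.sum_neg_distrib, ← hquad, gaussPdfMulti, hnorm, Pi.add_apply, add_sub_cancel_left,
    Finset.prod_const, inv_pow, Finset.card_univ, Fintype.card_fin, dotProduct]
  field_simp

variable {E : Type*} [NormedAddCommGroup E] [NormedSpace ℝ E]

lemma integral_gaussPdfMulti_mul_transpose_smul (m : Fin H → ℝ) {A : Matrix (Fin H) (Fin H) ℝ}
    (hA : IsUnit A) (f : (Fin H → ℝ) → E) :
    ∫ z, gaussPdfMulti m (A * Aᵀ) z • f z =
      ∫ u, f (m + A *ᵥ u) ∂(Measure.pi fun _ => gaussianReal 0 1) := by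
  rw [integral_pi_gaussianReal_zero_one, integral_eq_abs_det_smul_integral_add_mulVec m hA,
    ← integral_smul]
  simp_rw [smul_smul, abs_det_mul_gaussPdfMulti_add_mulVec m _ hA]

lemma integral_multivariateGaussian_eq_integral_pi {ι : Type*} [Fintype ι] [DecidableEq ι]
    (m : ι → ℝ) {S : Matrix ι ι ℝ} (hS : IsUnit (CFC.sqrt S)) (f : (ι → ℝ) → E) :
    ∫ y, f (ofLp y) ∂(multivariateGaussian (toLp 2 m) S) =
      ∫ u, f (m + CFC.sqrt S *ᵥ u) ∂(Measure.pi fun _ => gaussianReal 0 1) := by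
  have hembLp : MeasurableEmbedding (toLp 2 : (ι → ℝ) → EuclideanSpace ℝ ι) :=
    (MeasurableEquiv.toLp 2 (ι → ℝ)).measurableEmbedding
  have hinj : Function.Injective fun y : EuclideanSpace ℝ ι =>
      toLp 2 m + toEuclideanCLM (𝕜 := ℝ) (CFC.sqrt S) y := fun y z hyz =>
    ofLp_injective 2 (mulVec_injective_of_isUnit hS (congrArg ofLp (add_left_cancel hyz)))
  have hemb := Continuous.measurableEmbedding (by fun_prop) hinj
  rw [multivariateGaussian, ← map_pi_eq_stdGaussian, hemb.integral_map, hembLp.integral_map]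
  simp

lemma integral_gaussPdfMulti_smul (m : Fin H → ℝ) {S : Matrix (Fin H) (Fin H) ℝ} (hS : S.PosDef)
    (f : (Fin H → ℝ) → E) :
    ∫ z, gaussPdfMulti m S z • f z =
      ∫ y, f (ofLp y) ∂(multivariateGaussian (toLp 2 m) S) := by
  have hsq : CFC.sqrt S * (CFC.sqrt S)ᵀ = S := by
    have hsymm : (CFC.sqrt S)ᵀ = CFC.sqrt S := (CFC.sqrt_nonneg S).isSelfAdjoint
    rw [hsymm, CFC.sqrt_mul_sqrt_self S hS.posSemidef.nonneg]
  have hunit : IsUnit (CFC.sqrt S) := isUnit_of_mul_isUnit_left (hsq.symm ▸ hS.isUnit)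
  rw [integral_multivariateGaussian_eq_integral_pi m hunit,
    ← integral_gaussPdfMulti_mul_transpose_smul m hunit, hsq]

end GaussianDensity

section SecondMoments

variable {Ω ι κ : Type*} [MeasurableSpace Ω] [Fintype ι]

/-- The matrix of covariances `cov[X i, X j]` of the coordinates of a random vector `X`. -/
noncomputable def covarianceMatrix (X : Ω → ι → ℝ) (P : Measure Ω) : Matrix ι ι ℝ :=
  of fun i j => cov[fun ω => X ω i, fun ω => X ω j; P]

variable {X : Ω → ι → ℝ} {P : Measure Ω}

lemma memLp_mulVec_apply (hX : ∀ j, MemLp (fun ω => X ω j) 2 P) (W : Matrix κ ι ℝ) (i : κ) :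
    MemLp (fun ω => (W *ᵥ X ω) i) 2 P :=
  memLp_finsetSum _ fun j _ => (hX j).const_mul (W i j)

lemma integral_mulVec_apply (hX : ∀ j, Integrable (fun ω => X ω j) P) (W : Matrix κ ι ℝ) (i : κ) :
    ∫ ω, (W *ᵥ X ω) i ∂P = (W *ᵥ fun j => ∫ ω, X ω j ∂P) i := by
  simp only [mulVec, dotProduct]
  rw [integral_finsetSum _ fun j _ => (hX j).const_mul _]
  simp_rw [integral_const_mul]

variable [IsProbabilityMeasure P]

lemma variance_mulVec_apply (hX : ∀ j, MemLp (fun ω => X ω j) 2 P) (W : Matrix κ ι ℝ) (i : κ) :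
    Var[fun ω => (W *ᵥ X ω) i; P] = (W * covarianceMatrix X P * Wᵀ) i i := by
  rw [← covariance_self (memLp_mulVec_apply hX W i).aemeasurable]
  simp only [mulVec, dotProduct]
  rw [covariance_fun_sum_fun_sum (fun j => (hX j).const_mul _) (fun k => (hX k).const_mul _),
    Finset.sum_comm]
  simp only [covariance_const_mul_left, covariance_const_mul_right, mul_apply, covarianceMatrix,
    of_apply, transpose_apply, Finset.sum_mul]
  exact Finset.sum_congr rfl fun k _ => Finset.sum_congr rfl fun j _ => by ring

lemma integral_sq_const_sub {Y : Ω → ℝ} (hY : MemLp Y 2 P) (c : ℝ) :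
    ∫ ω, (c - Y ω) ^ 2 ∂P = Var[Y; P] + (∫ ω, Y ω ∂P - c) ^ 2 := by
  have h := variance_eq_sub ((memLp_const c).sub hY)
  change Var[fun ω => c - Y ω; P] = ∫ ω, (c - Y ω) ^ 2 ∂P - (∫ ω, (c - Y ω) ∂P) ^ 2 at h
  rw [variance_const_sub hY.aestronglyMeasurable,
    integral_sub (integrable_const c) (hY.integrable one_le_two), integral_const, probReal_univ,
    one_smul] at h
  linear_combination -h

lemma integrable_sq_sub_mulVec_apply (hX : ∀ j, MemLp (fun ω => X ω j) 2 P) (c : ℝ)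
    (W : Matrix κ ι ℝ) (i : κ) : Integrable (fun ω => (c - (W *ᵥ X ω) i) ^ 2) P :=
  ((memLp_const c).sub (memLp_mulVec_apply hX W i)).integrable_sq

variable [Fintype κ]

lemma integrable_sum_sq_sub_mulVec (hX : ∀ j, MemLp (fun ω => X ω j) 2 P) (x : κ → ℝ)
    (W : Matrix κ ι ℝ) : Integrable (fun ω => ∑ i, (x i - (W *ᵥ X ω) i) ^ 2) P :=
  integrable_finsetSum _ fun i _ => integrable_sq_sub_mulVec_apply hX (x i) W i

lemma integral_sum_sq_sub_mulVec (hX : ∀ j, MemLp (fun ω => X ω j) 2 P) (x : κ → ℝ)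
    (W : Matrix κ ι ℝ) :
    ∫ ω, ∑ i, (x i - (W *ᵥ X ω) i) ^ 2 ∂P =
      trace (Wᵀ * W * covarianceMatrix X P) +
        ∑ i, ((W *ᵥ fun j => ∫ ω, X ω j ∂P) i - x i) ^ 2 := by
  have htrace : trace (Wᵀ * W * covarianceMatrix X P) =
      ∑ i, Var[fun ω => (W *ᵥ X ω) i; P] := by
    simp_rw [variance_mulVec_apply hX W]
    rw [Matrix.mul_assoc, trace_mul_comm]
    rfl
  rw [htrace, ← Finset.sum_add_distrib, integral_finsetSum _ fun i _ =>
    integrable_sq_sub_mulVec_apply hX (x i) W i]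
  exact Finset.sum_congr rfl fun i _ => by
    rw [integral_sq_const_sub (memLp_mulVec_apply hX W i),
      integral_mulVec_apply fun j => (hX j).integrable one_le_two]

lemma integrable_centered_quadratic (hX : ∀ i, MemLp (fun ω => X ω i) 2 P) (m : ι → ℝ)
    (B : Matrix ι ι ℝ) :
    Integrable (fun ω => ∑ i, (X ω i - m i) * (B *ᵥ fun j => X ω j - m j) i) P := by
  have hcentered (i : ι) : MemLp (fun ω => X ω i - m i) 2 P := (hX i).sub (memLp_const _)
  exact integrable_finsetSum _ fun i _ =>
    (hcentered i).integrable_mul (memLp_mulVec_apply hcentered B i)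

lemma integral_centered_quadratic (hX : ∀ i, MemLp (fun ω => X ω i) 2 P) (B : Matrix ι ι ℝ) :
    ∫ ω, ∑ i, (X ω i - ∫ ω', X ω' i ∂P) * (B *ᵥ fun j => X ω j - ∫ ω', X ω' j ∂P) i ∂P =
      trace (B * covarianceMatrix X P) := by
  have hint (i j : ι) : Integrable (fun ω =>
      B i j * ((X ω j - ∫ ω', X ω' j ∂P) * (X ω i - ∫ ω', X ω' i ∂P))) P :=
    (((hX j).sub (memLp_const _)).integrable_mul ((hX i).sub (memLp_const _))).const_mul _
  have hexpand (ω : Ω) :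
      ∑ i, (X ω i - ∫ ω', X ω' i ∂P) * (B *ᵥ fun j => X ω j - ∫ ω', X ω' j ∂P) i =
        ∑ i, ∑ j, B i j * ((X ω j - ∫ ω', X ω' j ∂P) * (X ω i - ∫ ω', X ω' i ∂P)) := by
    simp only [mulVec, dotProduct, Finset.mul_sum]
    exact Finset.sum_congr rfl fun i _ => Finset.sum_congr rfl fun j _ => by ring
  simp_rw [hexpand]
  rw [integral_finsetSum _ fun i _ => integrable_finsetSum _ fun j _ => hint i j]
  simp only [trace, diag, mul_apply]
  refine Finset.sum_congr rfl fun i _ => ?_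
  rw [integral_finsetSum _ fun j _ => hint i j]
  simp_rw [integral_const_mul]
  rfl

end SecondMoments

section MultivariateGaussianMoments

variable {ι : Type*} [Fintype ι] [DecidableEq ι] (m : EuclideanSpace ℝ ι) {S : Matrix ι ι ℝ}

lemma memLp_eval_multivariateGaussian (S : Matrix ι ι ℝ) (i : ι) :
    MemLp (fun y : EuclideanSpace ℝ ι => y i) 2 (multivariateGaussian m S) :=
  (EuclideanSpace.proj (𝕜 := ℝ) i).comp_memLp' IsGaussian.memLp_two_id

lemma integral_eval_multivariateGaussian (S : Matrix ι ι ℝ) (i : ι) :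
    ∫ y, y i ∂(multivariateGaussian m S) = m i := by
  have h := (EuclideanSpace.proj (𝕜 := ℝ) i).integral_comp_comm
    (IsGaussian.integrable_fun_id (μ := multivariateGaussian m S))
  simpa using h

lemma covarianceMatrix_multivariateGaussian (hS : S.PosSemidef) :
    covarianceMatrix ofLp (multivariateGaussian m S) = S := by
  ext i j
  exact covariance_eval_multivariateGaussian hS i j

lemma integral_abs_eval_multivariateGaussian (hS : S.PosSemidef) {i : ι} (hi : 0 < S i i) :
    ∫ y, |y i| ∂(multivariateGaussian m S) = √(S i i) * Mfun (m i / √(S i i)) := by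
  have hlaw := measurePreserving_eval_multivariateGaussian (μ := m) hS (i := i)
  have h := integral_map (μ := multivariateGaussian m S) hlaw.measurable.aemeasurable
    (f := fun z : ℝ => |z|) (by fun_prop)
  rw [hlaw.map_eq, integral_abs_gaussianReal _ (Real.toNNReal_pos.mpr hi).ne',
    Real.coe_toNNReal _ hi.le] at h
  exact h.symm

end MultivariateGaussianMoments

section ExpectedLogDensities

variable {D H : ℕ}

lemma log_gaussObsPdf (W : Matrix (Fin D) (Fin H) ℝ) {s : ℝ} (hs : 0 ≤ s) (x : Fin D → ℝ)
    (z : Fin H → ℝ) :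
    log (gaussObsPdf W s x z) =
      -((D : ℝ) / 2) * log (2 * π * s) - (∑ i, (x i - (W *ᵥ z) i) ^ 2) / (2 * s) := by
  unfold gaussObsPdf
  rcases hs.eq_or_lt with rfl | hs
  · rcases D.eq_zero_or_pos with rfl | hD
    · simp
    · have hexponent : -(D : ℝ) / 2 ≠ 0 := by simp [hD.ne']
      simp [zero_rpow hexponent]
  · have hvar : 0 < 2 * π * s := by positivity
    rw [log_mul (rpow_pos_of_pos hvar _).ne' (exp_pos _).ne', log_exp, log_rpow hvar]
    ring

lemma log_laplacePdf {lam : Fin H → ℝ} (hlam : ∀ h, 0 < lam h) (z : Fin H → ℝ) :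
    log (laplacePdf lam z) = -∑ h, (log (2 * lam h) + |z h| / lam h) := by
  have hscale (h : Fin H) : 1 / (2 * lam h) ≠ 0 := by simp [(hlam h).ne']
  rw [laplacePdf, log_prod fun h _ => mul_ne_zero (hscale h) (exp_pos _).ne',
    ← Finset.sum_neg_distrib]
  refine Finset.sum_congr rfl fun h _ => ?_
  rw [log_mul (hscale h) (exp_pos _).ne', log_exp, one_div, log_inv]
  ring

lemma log_gaussPdfMulti (m : Fin H → ℝ) {S : Matrix (Fin H) (Fin H) ℝ} (hS : 0 < S.det)
    (z : Fin H → ℝ) :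
    log (gaussPdfMulti m S z) =
      -(1 / 2) * log ((2 * π) ^ H * S.det) -
        (∑ i, (z i - m i) * (S⁻¹ *ᵥ fun j => z j - m j) i) / 2 := by
  have hnorm : 0 < (2 * π) ^ H * S.det := by positivity
  rw [gaussPdfMulti, log_mul (inv_ne_zero (sqrt_pos.mpr hnorm).ne') (exp_pos _).ne', log_exp,
    log_inv, log_sqrt hnorm.le]
  ring

lemma log_det_two_pi_exp_smul {S : Matrix (Fin H) (Fin H) ℝ} (hS : S.det ≠ 0) :
    log ((2 * π * exp 1) • S).det = log ((2 * π) ^ H * S.det) + H := by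
  rw [det_smul, Fintype.card_fin, mul_pow, mul_right_comm,
    log_mul (mul_ne_zero (by positivity) hS) (by positivity), log_pow, log_exp, mul_one]

variable {Ω : Type*} [MeasurableSpace Ω] {X : Ω → Fin H → ℝ} {P : Measure Ω}
  [IsProbabilityMeasure P]

lemma integrable_log_gaussObsPdf (hX : ∀ h, MemLp (fun ω => X ω h) 2 P)
    (W : Matrix (Fin D) (Fin H) ℝ) {s : ℝ} (hs : 0 ≤ s) (x : Fin D → ℝ) :
    Integrable (fun ω => log (gaussObsPdf W s x (X ω))) P := by
  simp_rw [log_gaussObsPdf W hs]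
  exact (integrable_const _).sub ((integrable_sum_sq_sub_mulVec hX x W).div_const _)

lemma integral_log_gaussObsPdf (hX : ∀ h, MemLp (fun ω => X ω h) 2 P)
    (W : Matrix (Fin D) (Fin H) ℝ) {s : ℝ} (hs : 0 ≤ s) (x : Fin D → ℝ) :
    ∫ ω, log (gaussObsPdf W s x (X ω)) ∂P =
      -((D : ℝ) / 2) * log (2 * π * s) -
        (trace (Wᵀ * W * covarianceMatrix X P) +
          ∑ i, ((W *ᵥ fun h => ∫ ω, X ω h ∂P) i - x i) ^ 2) / (2 * s) := by
  simp_rw [log_gaussObsPdf W hs]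
  rw [integral_sub (integrable_const _) ((integrable_sum_sq_sub_mulVec hX x W).div_const _),
    integral_const, probReal_univ, one_smul, integral_div, integral_sum_sq_sub_mulVec hX]

lemma integrable_log_laplacePdf (hX : ∀ h, Integrable (fun ω => X ω h) P) {lam : Fin H → ℝ}
    (hlam : ∀ h, 0 < lam h) : Integrable (fun ω => log (laplacePdf lam (X ω))) P := by
  simp_rw [log_laplacePdf hlam]
  exact (integrable_finsetSum _ fun h _ =>
    (integrable_const _).add ((hX h).abs.div_const _)).neg

lemma integral_log_laplacePdf (hX : ∀ h, Integrable (fun ω => X ω h) P) {lam : Fin H → ℝ}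
    (hlam : ∀ h, 0 < lam h) :
    ∫ ω, log (laplacePdf lam (X ω)) ∂P =
      -∑ h, (log (2 * lam h) + (∫ ω, |X ω h| ∂P) / lam h) := by
  have hint (h : Fin H) : Integrable (fun ω => log (2 * lam h) + |X ω h| / lam h) P :=
    (integrable_const _).add ((hX h).abs.div_const _)
  simp_rw [log_laplacePdf hlam]
  rw [integral_neg, integral_finsetSum _ fun h _ => hint h]
  congr 1
  refine Finset.sum_congr rfl fun h _ => ?_
  rw [integral_add (integrable_const _) ((hX h).abs.div_const _), integral_const, probReal_univ,
    one_smul, integral_div]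

lemma integrable_log_gaussPdfMulti (hX : ∀ h, MemLp (fun ω => X ω h) 2 P) (m : Fin H → ℝ)
    {S : Matrix (Fin H) (Fin H) ℝ} (hS : 0 < S.det) :
    Integrable (fun ω => log (gaussPdfMulti m S (X ω))) P := by
  simp_rw [log_gaussPdfMulti m hS]
  exact (integrable_const _).sub ((integrable_centered_quadratic hX m _).div_const _)

lemma integral_log_gaussPdfMulti (hX : ∀ h, MemLp (fun ω => X ω h) 2 P)
    (hdet : 0 < (covarianceMatrix X P).det) :
    ∫ ω, log (gaussPdfMulti (fun h => ∫ ω', X ω' h ∂P) (covarianceMatrix X P) (X ω)) ∂P =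
      -(1 / 2 * log ((2 * π * exp 1) • covarianceMatrix X P).det) := by
  simp_rw [log_gaussPdfMulti _ hdet]
  rw [integral_sub (integrable_const _) ((integrable_centered_quadratic hX _ _).div_const _),
    integral_const, probReal_univ, one_smul, integral_div, integral_centered_quadratic hX,
    nonsing_inv_mul _ hdet.ne'.isUnit, trace_one, Fintype.card_fin,
    log_det_two_pi_exp_smul hdet.ne']
  ring

end ExpectedLogDensities

section ELBO

variable {N D H : ℕ}

lemma integral_gaussPdfMulti_mul_log_add_log_sub_log (x : Fin D → ℝ)
    (W : Matrix (Fin D) (Fin H) ℝ) (m : Fin H → ℝ) {S : Matrix (Fin H) (Fin H) ℝ} (hS : S.PosDef)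
    {s : ℝ} (hs : 0 ≤ s) {lam : Fin H → ℝ} (hlam : ∀ h, 0 < lam h) :
    ∫ z, gaussPdfMulti m S z *
        (log (gaussObsPdf W s x z) + log (laplacePdf lam z) - log (gaussPdfMulti m S z)) =
      1 / 2 * log ((2 * π * exp 1) • S).det -
        ∑ h, (log (2 * lam h) + √(S h h) * Mfun (m h / √(S h h)) / lam h) -
        (D / 2 * log (2 * π * s) +
          (trace (Wᵀ * W * S) + ∑ i, ((W *ᵥ m) i - x i) ^ 2) / (2 * s)) := by
  let q := multivariateGaussian (toLp 2 m) S
  have hmemLp (h : Fin H) : MemLp (fun z : EuclideanSpace ℝ (Fin H) => ofLp z h) 2 q :=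
    memLp_eval_multivariateGaussian _ S h
  have hmean (h : Fin H) : ∫ z, ofLp z h ∂q = m h := integral_eval_multivariateGaussian _ S h
  have hcov : covarianceMatrix ofLp q = S := covarianceMatrix_multivariateGaussian _ hS.posSemidef
  have habs (h : Fin H) : ∫ z, |ofLp z h| ∂q = √(S h h) * Mfun (m h / √(S h h)) :=
    integral_abs_eval_multivariateGaussian _ hS.posSemidef hS.diag_pos
  have hobs := integrable_log_gaussObsPdf hmemLp W hs x
  have hprior := integrable_log_laplacePdf (fun h => (hmemLp h).integrable one_le_two) hlam
  have hjoint : Integrable (fun z : EuclideanSpace ℝ (Fin H) =>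
      log (gaussObsPdf W s x (ofLp z)) + log (laplacePdf lam (ofLp z))) q := hobs.add hprior
  have hentropy := integral_log_gaussPdfMulti hmemLp (hcov ▸ hS.det_pos)
  simp_rw [hmean, hcov] at hentropy
  simp_rw [← smul_eq_mul (gaussPdfMulti m S _)]
  rw [integral_gaussPdfMulti_smul m hS,
    integral_sub hjoint (integrable_log_gaussPdfMulti hmemLp m hS.det_pos),
    integral_add hobs hprior, integral_log_gaussObsPdf hmemLp W hs,
    integral_log_laplacePdf (fun h => (hmemLp h).integrable one_le_two) hlam, hentropy]
  simp_rw [hmean, hcov, habs]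
  ring

/-- The evidence lower bound `ℒ(λ, σ²)` of the sparse coding model for the data `x`, with `lam`
and `s` standing for `λ` and `σ²` and the variational distributions `N(ν n, T n)` held fixed. -/
noncomputable def elbo (x : Fin N → Fin D → ℝ) (W : Matrix (Fin D) (Fin H) ℝ)
    (ν : Fin N → Fin H → ℝ) (T : Fin N → Matrix (Fin H) (Fin H) ℝ) (lam : Fin H → ℝ) (s : ℝ) : ℝ :=
  (1 / N : ℝ) * ∑ n, ∫ z, gaussPdfMulti (ν n) (T n) z *
    (log (gaussObsPdf W s (x n) z) + log (laplacePdf lam z) - log (gaussPdfMulti (ν n) (T n) z))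

/-- The scales `λ^opt`: the average over the data of the mean absolute value of the `h`-th
coordinate under `N(ν n, T n)`. -/
noncomputable def optimalScale (ν : Fin N → Fin H → ℝ) (T : Fin N → Matrix (Fin H) (Fin H) ℝ)
    (h : Fin H) : ℝ :=
  (1 / N : ℝ) * ∑ n, √(T n h h) * Mfun (ν n h / √(T n h h))

/-- The observation variance `σ²_opt`: the average over the data and the `D` coordinates of the
mean squared reconstruction error under `N(ν n, T n)`. -/
noncomputable def optimalVariance (x : Fin N → Fin D → ℝ) (W : Matrix (Fin D) (Fin H) ℝ)
    (ν : Fin N → Fin H → ℝ) (T : Fin N → Matrix (Fin H) (Fin H) ℝ) : ℝ :=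
  (1 / (N * D) : ℝ) * ∑ n, (trace (Wᵀ * W * T n) + ∑ i, ((W *ᵥ ν n) i - x n i) ^ 2)

variable (x : Fin N → Fin D → ℝ) (W : Matrix (Fin D) (Fin H) ℝ) (ν : Fin N → Fin H → ℝ)
  {T : Fin N → Matrix (Fin H) (Fin H) ℝ}

lemma optimalScale_pos (hN : 0 < N) (hT : ∀ n, (T n).PosDef) (h : Fin H) :
    0 < optimalScale ν T h := by
  have : Nonempty (Fin N) := ⟨⟨0, hN⟩⟩
  exact mul_pos (by positivity) (Finset.sum_pos (fun n _ =>
    mul_pos (sqrt_pos.mpr (hT n).diag_pos) (Mfun_pos _)) Finset.univ_nonempty)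

lemma trace_transpose_mul_self_mul_nonneg {S : Matrix (Fin H) (Fin H) ℝ} (hS : S.PosSemidef) :
    0 ≤ trace (Wᵀ * W * S) := by
  rw [Matrix.mul_assoc, trace_mul_comm]
  simpa using (hS.mul_mul_conjTranspose_same W).trace_nonneg

lemma optimalVariance_nonneg (hT : ∀ n, (T n).PosSemidef) : 0 ≤ optimalVariance x W ν T :=
  mul_nonneg (by positivity) (Finset.sum_nonneg fun n _ =>
    add_nonneg (trace_transpose_mul_self_mul_nonneg W (hT n))
      (Finset.sum_nonneg fun i _ => sq_nonneg _))

lemma natCast_mul_optimalVariance (T : Fin N → Matrix (Fin H) (Fin H) ℝ) :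
    D * optimalVariance x W ν T =
      (1 / N : ℝ) * ∑ n, (trace (Wᵀ * W * T n) + ∑ i, ((W *ᵥ ν n) i - x n i) ^ 2) := by
  rcases D.eq_zero_or_pos with rfl | hD
  · simp [trace]
  · rw [optimalVariance]
    field_simp

lemma elbo_eq (hN : N ≠ 0) (hT : ∀ n, (T n).PosDef) {lam : Fin H → ℝ} (hlam : ∀ h, 0 < lam h)
    {s : ℝ} (hs : 0 ≤ s) :
    elbo x W ν T lam s =
      (1 / N : ℝ) * ∑ n, 1 / 2 * log ((2 * π * exp 1) • T n).det -
        ∑ h, (log (2 * lam h) + optimalScale ν T h / lam h) -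
        D / 2 * (log (2 * π * s) + optimalVariance x W ν T / s) := by
  have hprior : (1 / N : ℝ) * ∑ n, ∑ h, (log (2 * lam h) +
      √(T n h h) * Mfun (ν n h / √(T n h h)) / lam h) =
      ∑ h, (log (2 * lam h) + optimalScale ν T h / lam h) := by
    rw [Finset.sum_comm, Finset.mul_sum]
    refine Finset.sum_congr rfl fun h _ => ?_
    rw [Finset.sum_add_distrib, ← Finset.sum_div, mul_add, mul_div_assoc', ← optimalScale]
    simp [hN]
  have hobs : (1 / N : ℝ) * ∑ n, (D / 2 * log (2 * π * s) +
      (trace (Wᵀ * W * T n) + ∑ i, ((W *ᵥ ν n) i - x n i) ^ 2) / (2 * s)) =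
      D / 2 * (log (2 * π * s) + optimalVariance x W ν T / s) := by
    rw [Finset.sum_add_distrib, ← Finset.sum_div, mul_add, mul_div_assoc',
      ← natCast_mul_optimalVariance, Finset.sum_const, Finset.card_univ, Fintype.card_fin,
      nsmul_eq_mul, one_div_mul_eq_div, mul_div_cancel_left₀ _ (Nat.cast_ne_zero.mpr hN)]
    ring
  simp_rw [elbo, fun n => integral_gaussPdfMulti_mul_log_add_log_sub_log (x n) W (ν n) (hT n) hs
    hlam]
  rw [Finset.sum_sub_distrib, Finset.sum_sub_distrib, mul_sub, mul_sub, hprior, hobs]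

-- At `t = 0` both sides vanish, as `log 0 = 0` and `0 / 0 = 0`.
lemma log_mul_exp_one_mul {c : ℝ} (hc : c ≠ 0) (t : ℝ) :
    log (c * exp 1 * t) = log (c * t) + t / t := by
  rcases eq_or_ne t 0 with rfl | ht
  · simp
  · rw [mul_right_comm, log_mul (mul_ne_zero hc ht) (exp_pos 1).ne', log_exp, div_self ht]

end ELBO

/-- **Entropy-based analytic ELBO.**  The ELBO of the sparse coding model with Gaussian
variational distributions `q_n = N(nu_n, T_n)` (with positive definite `T_n`), evaluated
at the optimal scales `lamopt` and optimal variance `sigma2opt`, equals the fully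
analytic entropy sum
`(1/N)*sum_n (1/2)*log det(2*pi*e*T_n) - sum_h log(2*e*lamopt_h)
  - (D/2)*log(2*pi*e*sigma2opt)`. -/
theorem entropy_based_analytic_elbo
    (N D H : ℕ) (hN : 0 < N)
    (x : Fin N → Fin D → ℝ) (W : Matrix (Fin D) (Fin H) ℝ)
    (ν : Fin N → Fin H → ℝ) (T : Fin N → Matrix (Fin H) (Fin H) ℝ)
    (hTpd : ∀ n, (T n).PosDef)
    (σ2opt : ℝ)
    (hσ2opt : σ2opt = (1 / (N * D) : ℝ) * ∑ n,
      (Matrix.trace (Wᵀ * W * T n) + ∑ i, (W.mulVec (ν n) i - x n i) ^ 2))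
    (lamopt : Fin H → ℝ)
    (hlamopt : ∀ h, lamopt h = (1 / N : ℝ) * ∑ n,
      Real.sqrt (T n h h) * Mfun (ν n h / Real.sqrt (T n h h))) :
    (1 / N : ℝ) * ∑ n, ∫ z : Fin H → ℝ,
        gaussPdfMulti (ν n) (T n) z *
          (Real.log (gaussObsPdf W σ2opt (x n) z) + Real.log (laplacePdf lamopt z) -
            Real.log (gaussPdfMulti (ν n) (T n) z)) =
      (1 / N : ℝ) * ∑ n, (1 / 2 : ℝ) * Real.log ((2 * Real.pi * Real.exp 1) • T n).det -
        ∑ h, Real.log (2 * Real.exp 1 * lamopt h) -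
        ((D : ℝ) / 2) * Real.log (2 * Real.pi * Real.exp 1 * σ2opt) := by
  obtain rfl : lamopt = optimalScale ν T := funext hlamopt
  obtain rfl : σ2opt = optimalVariance x W ν T := hσ2opt
  change elbo x W ν T (optimalScale ν T) (optimalVariance x W ν T) = _
  rw [elbo_eq x W ν hN.ne' hTpd (optimalScale_pos ν hN hTpd)
    (optimalVariance_nonneg x W ν fun n => (hTpd n).posSemidef)]
  simp_rw [log_mul_exp_one_mul two_ne_zero, log_mul_exp_one_mul two_pi_pos.ne']
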